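/- arXiv:2603.26172 — 4 statements merged into one kernel-verified Lean document; each statement's English description precedes it below -/
import Mathlib

section
/- For all real numbers α and β with 0 < β < α, the function x ↦ sin(α·x)/sin(β·x) is strictly decreasing on the interval (0, π/α]; in particular it is injective on (0, π/α]. -/
open Real Set

/-- For all real numbers `α` and `β` with `0 < β < α`, the function
`x ↦ sin (α * x) / sin (β * x)` is strictly decreasing on the interval `(0, π/α]`;
in particular it is injective on `(0, π/α]`. -/
theorem sin_ratio_strictAntiOn_and_injOn (α β : ℝ) (hβ : 0 < β) (hβα : β < α) :
    StrictAntiOn (fun x => Real.sin (α * x) / Real.sin (β * x)) (Set.Ioc 0 (π / α)) ∧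
    Set.InjOn (fun x => Real.sin (α * x) / Real.sin (β * x)) (Set.Ioc 0 (π / α)) := by
  have hα : 0 < α := hβ.trans hβα
  have hs : ∀ c x : ℝ, HasDerivAt (fun x => Real.sin (c * x)) (c * Real.cos (c * x)) x := by
    intro c x
    have h := ((hasDerivAt_id x).const_mul c).sin
    simp only [id, mul_one] at h
    exact h.congr_deriv (by ring)
  have hc : ∀ c x : ℝ, HasDerivAt (fun x => Real.cos (c * x)) (-(c * Real.sin (c * x))) x := by
    intro c x
    have h := ((hasDerivAt_id x).const_mul c).cos
    simp only [id, mul_one] at h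
    exact h.congr_deriv (by ring)
  have hle : ∀ x ∈ Set.Ioc 0 (π / α), α * x ≤ π := by
    intro x hx
    have := (le_div_iff₀ hα).1 hx.2
    linarith
  have hsβ : ∀ x ∈ Set.Ioc 0 (π / α), 0 < Real.sin (β * x) := by
    intro x hx
    have h1 := mul_lt_mul_of_pos_right hβα hx.1
    exact Real.sin_pos_of_pos_of_lt_pi (mul_pos hβ hx.1) (by linarith [hle x hx])
  have hN : StrictAntiOn (fun x => α * Real.cos (α * x) * Real.sin (β * x)
      - Real.sin (α * x) * (β * Real.cos (β * x))) (Set.Icc 0 (π / α)) := by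
    apply strictAntiOn_of_deriv_neg (convex_Icc _ _)
    · fun_prop
    · intro x hx
      rw [interior_Icc] at hx
      have hd := (((hc α x).const_mul α).mul (hs β x)).sub
        ((hs α x).mul ((hc β x).const_mul β))
      have hd' : HasDerivAt (fun x => α * Real.cos (α * x) * Real.sin (β * x)
          - Real.sin (α * x) * (β * Real.cos (β * x)))
          (-((α ^ 2 - β ^ 2) * (Real.sin (α * x) * Real.sin (β * x)))) x :=
        hd.congr_deriv (by ring)
      rw [hd'.deriv]
      have h1 : α * x < π := by
        have := (lt_div_iff₀ hα).1 hx.2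
        linarith
      have h2 := Real.sin_pos_of_pos_of_lt_pi (mul_pos hα hx.1) h1
      have h3 := hsβ x ⟨hx.1, hx.2.le⟩
      have h4 : 0 < α ^ 2 - β ^ 2 := by nlinarith
      have := mul_pos h4 (mul_pos h2 h3)
      linarith
  have main : StrictAntiOn (fun x => Real.sin (α * x) / Real.sin (β * x))
      (Set.Ioc 0 (π / α)) := by
    have hd : ∀ x ∈ Set.Ioc 0 (π / α), HasDerivAt
        (fun x => Real.sin (α * x) / Real.sin (β * x)) _ x :=
      fun x hx => (hs α x).div (hs β x) (hsβ x hx).ne'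
    apply strictAntiOn_of_deriv_neg (convex_Ioc _ _)
    · exact fun x hx => (hd x hx).continuousAt.continuousWithinAt
    · intro x hx
      have hx' := interior_subset hx
      rw [(hd x hx').deriv]
      apply div_neg_of_neg_of_pos _ (pow_pos (hsβ x hx') 2)
      have := hN ⟨le_refl 0, (hx'.1.trans_le hx'.2).le⟩ ⟨hx'.1.le, hx'.2⟩ hx'.1
      simpa using this
  exact ⟨main, main.injOn⟩
end

section
/- Let n ≥ 2 be an integer, let ℓ > 0 and r > 0, and let k_D, k_N > 0 satisfy k_D + k_N = π/ℓ and k_D > π/(2ℓ). Let θ_D and θ_N be real numbers with 0 < k_D·r + θ_D < π and 0 < k_N·r + θ_N < π, and suppose that n·cot(k_D·ℓ) + cot(k_D·r + θ_D) = 0 and n·cot(k_N·ℓ) + cot(k_N·r + θ_N) = 0, where cot t := cos t / sin t. Then (k_D·r + θ_D) + (k_N·r + θ_N) = π; equivalently, θ_N = π·(1 − r/ℓ) − θ_D. -/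
open Real

/-- Kirchhoff conditions at the centre of a pendant star: given `n ≥ 2`, `ℓ, r > 0`,
frequencies `k_D, k_N > 0` with `k_D + k_N = π/ℓ` and `k_D > π/(2ℓ)`, and phases
`θ_D, θ_N` with `k_D·r + θ_D, k_N·r + θ_N ∈ (0, π)` satisfying
`n·cot(k_D·ℓ) + cot(k_D·r + θ_D) = 0` and `n·cot(k_N·ℓ) + cot(k_N·r + θ_N) = 0`
(where `cot t := cos t / sin t`), one has `(k_D·r + θ_D) + (k_N·r + θ_N) = π`;
equivalently, `θ_N = π(1 - r/ℓ) - θ_D`. -/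
theorem kirchhoff_phase_relation (n : ℕ) (hn : 2 ≤ n) (ℓ r kD kN θD θN : ℝ)
    (hℓ : 0 < ℓ) (hr : 0 < r) (hkD : 0 < kD) (hkN : 0 < kN)
    (hsum : kD + kN = π / ℓ) (hkD2 : π / (2 * ℓ) < kD)
    (hD1 : 0 < kD * r + θD) (hD2 : kD * r + θD < π)
    (hN1 : 0 < kN * r + θN) (hN2 : kN * r + θN < π)
    (heqD : (n : ℝ) * (Real.cos (kD * ℓ) / Real.sin (kD * ℓ)) +
      Real.cos (kD * r + θD) / Real.sin (kD * r + θD) = 0)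
    (heqN : (n : ℝ) * (Real.cos (kN * ℓ) / Real.sin (kN * ℓ)) +
      Real.cos (kN * r + θN) / Real.sin (kN * r + θN) = 0) :
    (kD * r + θD) + (kN * r + θN) = π ∧ θN = π * (1 - r / ℓ) - θD := by
  have hkN' : kN * ℓ = π - kD * ℓ := by
    have h : (kD + kN) * ℓ = π := by rw [hsum]; field_simp
    linarith
  rw [hkN', Real.cos_pi_sub, Real.sin_pi_sub] at heqN
  have hsD := Real.sin_pos_of_pos_of_lt_pi hD1 hD2
  have hsN := Real.sin_pos_of_pos_of_lt_pi hN1 hN2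
  have hcot : Real.cos (kD * r + θD) / Real.sin (kD * r + θD) +
      Real.cos (kN * r + θN) / Real.sin (kN * r + θN) = 0 := by
    rw [neg_div] at heqN
    linarith
  rw [div_add_div _ _ hsD.ne' hsN.ne', div_eq_zero_iff] at hcot
  have hnum := hcot.resolve_right (mul_pos hsD hsN).ne'
  have hsin : Real.sin ((kD * r + θD) + (kN * r + θN) - π) = 0 := by
    rw [Real.sin_sub_pi, Real.sin_add]
    linarith
  have hmain : (kD * r + θD) + (kN * r + θN) = π := by
    have := (Real.sin_eq_zero_iff_of_lt_of_lt (by linarith) (by linarith)).1 hsin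
    linarith
  refine ⟨hmain, ?_⟩
  have h2 : (kD + kN) * r = π * (r / ℓ) := by rw [hsum]; ring
  linarith
end

section
/- Let n ≥ 2 be an integer, let ℓ > 0 and r > 0, and let k_D, k_N > 0 satisfy k_D + k_N = π/ℓ and k_D > π/(2ℓ). Let θ_D and θ_N be real numbers with 0 < k_D·r + θ_D < π and 0 < k_N·r + θ_N < π, and suppose that n·cot(k_D·ℓ) + cot(k_D·r + θ_D) = 0 and n·cot(k_N·ℓ) + cot(k_N·r + θ_N) = 0, where cot t := cos t / sin t. Then (π − θ_N)/k_N < (π − θ_D)/k_D. -/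
open Real

/-- Under the Kirchhoff conditions at the centre of a pendant star (with `n ≥ 2`,
`ℓ, r > 0`, frequencies `k_D, k_N > 0` with `k_D + k_N = π/ℓ`, `k_D > π/(2ℓ)`, and phases
`θ_D, θ_N` with `k_D·r + θ_D, k_N·r + θ_N ∈ (0, π)` satisfying
`n·cot(k_D·ℓ) + cot(k_D·r + θ_D) = 0` and `n·cot(k_N·ℓ) + cot(k_N·r + θ_N) = 0`,
where `cot t := cos t / sin t`), the interval lengths satisfy
`(π - θ_N)/k_N < (π - θ_D)/k_D`. -/
theorem interval_length_comparison (n : ℕ) (hn : 2 ≤ n) (ℓ r kD kN θD θN : ℝ)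
    (hℓ : 0 < ℓ) (hr : 0 < r) (hkD : 0 < kD) (hkN : 0 < kN)
    (hsum : kD + kN = π / ℓ) (hkD2 : π / (2 * ℓ) < kD)
    (hD1 : 0 < kD * r + θD) (hD2 : kD * r + θD < π)
    (hN1 : 0 < kN * r + θN) (hN2 : kN * r + θN < π)
    (heqD : (n : ℝ) * (Real.cos (kD * ℓ) / Real.sin (kD * ℓ)) +
      Real.cos (kD * r + θD) / Real.sin (kD * r + θD) = 0)
    (heqN : (n : ℝ) * (Real.cos (kN * ℓ) / Real.sin (kN * ℓ)) +
      Real.cos (kN * r + θN) / Real.sin (kN * r + θN) = 0) :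
    (π - θN) / kN < (π - θD) / kD := by
  have hS : kD * ℓ + kN * ℓ = π := by
    rw [← add_mul, hsum]; field_simp
  have hD : π / 2 < kD * ℓ := by
    rw [div_lt_iff₀ (by positivity)] at hkD2
    linarith
  have hNpos : 0 < kN * ℓ := by positivity
  have hDpi : kD * ℓ < π := by linarith
  have hx : kN * ℓ = π - kD * ℓ := by linarith
  rw [hx, Real.cos_pi_sub, Real.sin_pi_sub] at heqN
  have hsD : 0 < Real.sin (kD * ℓ) := Real.sin_pos_of_pos_of_lt_pi (by positivity) hDpi
  have hcD : Real.cos (kD * ℓ) < 0 :=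
    Real.cos_neg_of_pi_div_two_lt_of_lt hD (by linarith)
  have hsa := Real.sin_pos_of_pos_of_lt_pi hD1 hD2
  have hsb := Real.sin_pos_of_pos_of_lt_pi hN1 hN2
  have hn' : (2 : ℝ) ≤ n := by exact_mod_cast hn
  obtain ⟨α, hα⟩ : ∃ α, α = kD * r + θD := ⟨_, rfl⟩
  obtain ⟨β, hβ⟩ : ∃ β, β = kN * r + θN := ⟨_, rfl⟩
  rw [← hα] at hD1 hD2 heqD hsa
  rw [← hβ] at hN1 hN2 heqN hsb
  -- the two phases are supplementary
  have hab : α + β = π := by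
    have h0 : Real.cos α / Real.sin α + Real.cos β / Real.sin β = 0 := by
      rw [neg_div] at heqN; linarith
    have h1 : Real.sin (α + β) = 0 := by
      rw [Real.sin_add]
      field_simp at h0
      linarith
    rcases lt_trichotomy (α + β) π with h | h | h
    · exact absurd h1 (Real.sin_pos_of_pos_of_lt_pi (by linarith) h).ne'
    · exact h
    · have h2 : 0 < Real.sin (α + β - π) :=
        Real.sin_pos_of_pos_of_lt_pi (by linarith) (by linarith)
      rw [Real.sin_sub_pi] at h2
      linarith
  -- the Dirichlet phase is smaller than `kN * ℓ`
  have hlt : α < kN * ℓ := by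
    have h0 : (n : ℝ) * Real.cos (kD * ℓ) * Real.sin α
        + Real.cos α * Real.sin (kD * ℓ) = 0 := by
      have h := heqD
      rw [← mul_div_assoc, div_add_div _ _ hsD.ne' hsa.ne', div_eq_zero_iff] at h
      rcases h with h | h
      · linarith
      · exact absurd h (mul_pos hsD hsa).ne'
    have h1 : 0 < Real.sin (α + kD * ℓ) := by
      rw [Real.sin_add]
      have h2 : 0 < Real.sin α * (-Real.cos (kD * ℓ)) := mul_pos hsa (by linarith)
      nlinarith
    by_contra hc
    have h2 : 0 ≤ Real.sin (α + kD * ℓ - π) :=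
      Real.sin_nonneg_of_nonneg_of_le_pi (by linarith) (by linarith)
    rw [Real.sin_sub_pi] at h2
    linarith
  have hfin : α * (kD + kN) < π * kN := by
    rw [hsum, ← mul_div_assoc, div_lt_iff₀ hℓ]
    nlinarith [Real.pi_pos]
  rw [div_lt_div_iff₀ hkN hkD]
  have e1 : θD = α - kD * r := by linarith
  have e2 : θN = π - α - kN * r := by linarith
  rw [e1, e2]
  nlinarith
end

section
/- Let n ≥ 2 be an integer, ℓ > 0, and let k_D, k_N be real numbers with 0 < k_N < k_D < π/ℓ. Let c > 0 and c₀ > 0, and let θ_D, θ_N be real numbers with 0 < k_D·θ_D < π and 0 < k_N·θ_N < π. Suppose the following four equations hold: c₀·sin(k_D·θ_D) = c·sin(k_D·ℓ); c₀·sin(k_N·θ_N) = c·sin(k_N·ℓ); n·c·cos(k_D·ℓ) = c₀·cos(k_D·θ_D); and n·c·cos(k_N·ℓ) = c₀·cos(k_N·θ_N). Then k_D + k_N = π/ℓ. -/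
open Real

/-- Continuity and Kirchhoff conditions at the central vertex of an equilateral pendant star
with `n ≥ 2` Dirichlet edges of length `ℓ`, for two positive eigenfunctions of frequencies
`k_D > k_N > 0` (with `k_D < π/ℓ`), amplitudes `c, c₀ > 0` and phases `θ_D, θ_N` with
`k_D·θ_D, k_N·θ_N ∈ (0, π)`, force the frequency relation `k_D + k_N = π/ℓ`. -/
theorem star_frequency_relation (n : ℕ) (hn : 2 ≤ n) (ℓ kD kN c c₀ θD θN : ℝ)
    (hℓ : 0 < ℓ) (hkN : 0 < kN) (hNk : kN < kD) (hkD : kD < π / ℓ)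
    (hc : 0 < c) (hc₀ : 0 < c₀)
    (hθD1 : 0 < kD * θD) (hθD2 : kD * θD < π)
    (hθN1 : 0 < kN * θN) (hθN2 : kN * θN < π)
    (e1 : c₀ * Real.sin (kD * θD) = c * Real.sin (kD * ℓ))
    (e2 : c₀ * Real.sin (kN * θN) = c * Real.sin (kN * ℓ))
    (e3 : (n : ℝ) * c * Real.cos (kD * ℓ) = c₀ * Real.cos (kD * θD))
    (e4 : (n : ℝ) * c * Real.cos (kN * ℓ) = c₀ * Real.cos (kN * θN)) :
    kD + kN = π / ℓ := by
  have hn' : (2 : ℝ) ≤ (n : ℝ) := by exact_mod_cast hn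
  have key : ∀ x y : ℝ, c₀ * Real.sin y = c * Real.sin x →
      (n : ℝ) * c * Real.cos x = c₀ * Real.cos y →
      c₀ ^ 2 = c ^ 2 * (1 + ((n : ℝ) ^ 2 - 1) * Real.cos x ^ 2) := by
    intro x y h1 h2
    have hx := Real.sin_sq_add_cos_sq x
    have hy := Real.sin_sq_add_cos_sq y
    calc c₀ ^ 2 = (c₀ * Real.sin y) ^ 2 + (c₀ * Real.cos y) ^ 2 := by
          linear_combination (-c₀ ^ 2) * hy
      _ = (c * Real.sin x) ^ 2 + ((n : ℝ) * c * Real.cos x) ^ 2 := by rw [h1, h2]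
      _ = _ := by linear_combination (c ^ 2) * hx
  have hD := key _ _ e1 e3
  have hN := key _ _ e2 e4
  have hpos : 0 < c ^ 2 * ((n : ℝ) ^ 2 - 1) := by
    apply mul_pos (by positivity)
    nlinarith
  have hsq : Real.cos (kD * ℓ) ^ 2 = Real.cos (kN * ℓ) ^ 2 := by
    apply mul_left_cancel₀ hpos.ne'
    linarith
  have hDℓ : kD * ℓ < π := (lt_div_iff₀ hℓ).1 hkD
  have hNℓ : 0 < kN * ℓ := mul_pos hkN hℓ
  have hlt : kN * ℓ < kD * ℓ := mul_lt_mul_of_pos_right hNk hℓ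
  rw [eq_div_iff hℓ.ne']
  rcases sq_eq_sq_iff_eq_or_eq_neg.1 hsq with h | h
  · have := Real.injOn_cos ⟨by linarith, by linarith⟩ ⟨by linarith, by linarith⟩ h
    linarith
  · rw [← Real.cos_pi_sub] at h
    have := Real.injOn_cos ⟨by linarith, by linarith⟩ ⟨by linarith, by linarith⟩ h
    linarith
end
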